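/- Let w > 0 and define f(w, y) = ∑_{l=0}^∞ (2l+1)·P_l(y)/(l(l+1)+w) for y ∈ [-1, 1). Then f(w, y) → +∞ as y → 1⁻; equivalently, the Green's function G of the screened Poisson equation on the sphere diverges to -∞ as the angular separation γ tends to 0. -/

import Mathlib

open Filter Topology

/-- The Legendre polynomials `P l` on `ℝ`, i.e. the orthogonal polynomials on `[-1,1]`
normalized by `P l 1 = 1`, defined via the Bonnet recurrence
`P 0 y = 1`, `P 1 y = y`, `(n+2) • P (n+2) y = (2n+3) y P (n+1) y - (n+1) P n y`. -/
noncomputable def legendreP : ℕ → ℝ → ℝ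
  | 0, _ => 1
  | 1, y => y
  | (n + 2), y =>
      ((2 * (n : ℝ) + 3) * y * legendreP (n + 1) y - ((n : ℝ) + 1) * legendreP n y) / ((n : ℝ) + 2)

/-!
By Laplace's formula, `P l y` is the mean over `φ ∈ [0, π]` of `z ^ l`, where
`z = y + i √(1 - y²) cos φ` lies in the closed unit disc. Summing `∑ z ^ l / l = -log (1 - z)` under
the integral, `∑ P l y / l` is the mean of `-log ‖1 - z‖`, and `‖1 - z‖² ≤ 2 (1 - y)`, so this
series is at least `-log (2 (1 - y)) / 2`. The coefficients `(2l+1)/(l(l+1)+w)` differ from `2 / l`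
by an absolutely summable sequence, and `|P l y| ≤ 1`, so the two series differ by a bounded amount.
-/

section LaplaceIntegral

open scoped Real

theorem add_two_mul_legendreP (n : ℕ) (y : ℝ) :
    (n + 2) * legendreP (n + 2) y =
      (2 * n + 3) * y * legendreP (n + 1) y - (n + 1) * legendreP n y := by
  rw [legendreP, mul_div_cancel₀ _ (by positivity)]

/-- The Bonnet combination of three consecutive powers is an exact derivative, of a function that
vanishes at `0` and `π`: this is why the Laplace integrals satisfy the Legendre recurrence. -/
theorem hasDerivAt_mul_sin_mul_pow {y s : ℂ} (hs : s ^ 2 = y ^ 2 - 1) (n : ℕ) (φ : ℝ) :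
    HasDerivAt (fun φ : ℝ ↦ s * Real.sin φ * (y + s * Real.cos φ) ^ (n + 1))
      ((n + 2) * (y + s * Real.cos φ) ^ (n + 2) - (2 * n + 3) * y * (y + s * Real.cos φ) ^ (n + 1) +
        (n + 1) * (y + s * Real.cos φ) ^ n) φ := by
  have hsin := (Real.hasDerivAt_sin φ).ofReal_comp.const_mul s
  have hcos := ((Real.hasDerivAt_cos φ).ofReal_comp.const_mul s).const_add y
  refine (hsin.mul (hcos.pow (n + 1))).congr_deriv ?_
  have hpyth : (Real.sin φ : ℂ) ^ 2 = 1 - (Real.cos φ : ℂ) ^ 2 := by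
    exact_mod_cast Real.sin_sq φ
  simp only [Pi.pow_apply, Nat.add_sub_cancel]
  push_cast at hpyth ⊢
  linear_combination
    (-(n + 1) * s ^ 2 * (y + s * Complex.cos φ) ^ n) * hpyth -
      (n + 1) * (y + s * Complex.cos φ) ^ n * hs

theorem integral_add_mul_cos_pow_recurrence {y s : ℂ} (hs : s ^ 2 = y ^ 2 - 1) (n : ℕ) :
    (n + 2) * ∫ φ in (0 : ℝ)..π, (y + s * Real.cos φ) ^ (n + 2) =
      (2 * n + 3) * y * (∫ φ in (0 : ℝ)..π, (y + s * Real.cos φ) ^ (n + 1)) -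
        (n + 1) * ∫ φ in (0 : ℝ)..π, (y + s * Real.cos φ) ^ n := by
  have hint (c : ℂ) (k : ℕ) :
      IntervalIntegrable (fun φ : ℝ ↦ c * (y + s * Real.cos φ) ^ k) MeasureTheory.volume 0 π :=
    (by fun_prop : Continuous _).intervalIntegrable _ _
  have hFTC := intervalIntegral.integral_eq_sub_of_hasDerivAt
    (fun φ _ ↦ hasDerivAt_mul_sin_mul_pow hs n φ)
    (((hint _ _).sub (hint _ _)).add (hint _ _))
  rw [intervalIntegral.integral_add ((hint _ _).sub (hint _ _)) (hint _ _),
    intervalIntegral.integral_sub (hint _ _) (hint _ _)] at hFTC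
  simp only [intervalIntegral.integral_const_mul, Real.sin_pi, Real.sin_zero, Complex.ofReal_zero,
    mul_zero, zero_mul, sub_zero] at hFTC
  linear_combination hFTC

theorem legendreP_eq_integral_of_sq_eq {y : ℝ} {s : ℂ} (hs : s ^ 2 = (y : ℂ) ^ 2 - 1) (n : ℕ) :
    (legendreP n y : ℂ) = (π : ℂ)⁻¹ * ∫ φ in (0 : ℝ)..π, (y + s * Real.cos φ) ^ n := by
  have hπ : (π : ℂ) ≠ 0 := Complex.ofReal_ne_zero.2 Real.pi_ne_zero
  induction n using Nat.twoStepInduction with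
  | zero => simp [legendreP, hπ]
  | one =>
    have hcos : ∫ φ in (0 : ℝ)..π, s * (Real.cos φ : ℂ) = 0 := by
      rw [intervalIntegral.integral_const_mul, intervalIntegral.integral_ofReal, integral_cos]
      simp
    simp_rw [pow_one]
    rw [intervalIntegral.integral_add intervalIntegrable_const
      ((by fun_prop : Continuous _).intervalIntegrable _ _), hcos]
    simp [legendreP, hπ]
  | more n ih₀ ih₁ =>
    have hn : (n + 2 : ℂ) ≠ 0 := by exact_mod_cast (n + 1).succ_ne_zero
    have hrec : (n + 2 : ℂ) * legendreP (n + 2) y =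
        (2 * n + 3) * y * legendreP (n + 1) y - (n + 1) * legendreP n y := by
      exact_mod_cast add_two_mul_legendreP n y
    apply mul_left_cancel₀ hn
    rw [hrec, ih₀, ih₁]
    linear_combination -(π : ℂ)⁻¹ * integral_add_mul_cos_pow_recurrence hs n

/-- The number `y + i √(1 - y²) cos φ` whose `n`-th power has mean `P n y` over `φ ∈ [0, π]` in
Laplace's formula. It is only meaningful for `|y| ≤ 1`, where the square root is not truncated. -/
noncomputable def laplaceBase (y φ : ℝ) : ℂ := y + Complex.I * √(1 - y ^ 2) * Real.cos φ

theorem continuous_laplaceBase (y : ℝ) : Continuous (laplaceBase y) := by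
  unfold laplaceBase
  fun_prop

theorem re_laplaceBase (y φ : ℝ) : (laplaceBase y φ).re = y := by
  simp [laplaceBase, -Complex.ofReal_cos]

theorem im_laplaceBase (y φ : ℝ) : (laplaceBase y φ).im = √(1 - y ^ 2) * Real.cos φ := by
  simp [laplaceBase, -Complex.ofReal_cos]

variable {y : ℝ}

theorem legendreP_eq_integral (hy : |y| ≤ 1) (n : ℕ) :
    (legendreP n y : ℂ) = (π : ℂ)⁻¹ * ∫ φ in (0 : ℝ)..π, laplaceBase y φ ^ n := by
  refine legendreP_eq_integral_of_sq_eq ?_ n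
  have hsqrt : ((√(1 - y ^ 2) : ℝ) : ℂ) ^ 2 = 1 - (y : ℂ) ^ 2 := by
    exact_mod_cast Real.sq_sqrt (sub_nonneg.2 ((sq_le_one_iff_abs_le_one y).2 hy))
  rw [mul_pow, Complex.I_sq, hsqrt]
  ring

theorem norm_laplaceBase_sq (hy : |y| ≤ 1) (φ : ℝ) :
    ‖laplaceBase y φ‖ ^ 2 = 1 - (1 - y ^ 2) * Real.sin φ ^ 2 := by
  have hsqrt := Real.sq_sqrt (sub_nonneg.2 ((sq_le_one_iff_abs_le_one y).2 hy))
  rw [Complex.sq_norm, Complex.normSq_apply, re_laplaceBase, im_laplaceBase]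
  linear_combination Real.cos φ ^ 2 * hsqrt + (1 - y ^ 2) * Real.sin_sq_add_cos_sq φ

theorem norm_laplaceBase_le (hy : |y| ≤ 1) (φ : ℝ) :
    ‖laplaceBase y φ‖ ≤ 1 - (1 - y ^ 2) * Real.sin φ ^ 2 / 2 := by
  linarith [norm_laplaceBase_sq hy φ, sq_nonneg (‖laplaceBase y φ‖ - 1)]

theorem norm_laplaceBase_le_one (hy : |y| ≤ 1) (φ : ℝ) : ‖laplaceBase y φ‖ ≤ 1 := by
  have hy' : 0 ≤ 1 - y ^ 2 := sub_nonneg.2 ((sq_le_one_iff_abs_le_one y).2 hy)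
  exact (norm_laplaceBase_le hy φ).trans (sub_le_self _ (by positivity))

theorem norm_one_sub_laplaceBase_sq_le (hy : |y| ≤ 1) (φ : ℝ) :
    ‖1 - laplaceBase y φ‖ ^ 2 ≤ 2 * (1 - y) := by
  have hexpand : ‖1 - laplaceBase y φ‖ ^ 2 = 1 - 2 * y + ‖laplaceBase y φ‖ ^ 2 := by
    simp only [Complex.sq_norm, Complex.normSq_apply, Complex.sub_re, Complex.sub_im,
      Complex.one_re, Complex.one_im, re_laplaceBase]
    ring
  linarith [pow_le_one₀ (n := 2) (norm_nonneg _) (norm_laplaceBase_le_one hy φ)]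

theorem one_sub_laplaceBase_mem_slitPlane (hy : y < 1) (φ : ℝ) :
    1 - laplaceBase y φ ∈ Complex.slitPlane := by
  left
  rwa [Complex.sub_re, Complex.one_re, re_laplaceBase, sub_pos]

theorem continuous_log_one_sub_laplaceBase (hy : y < 1) :
    Continuous fun φ ↦ Complex.log (1 - laplaceBase y φ) :=
  (continuous_const.sub (continuous_laplaceBase y)).clog (one_sub_laplaceBase_mem_slitPlane hy)

theorem abs_legendreP_le_one (hy : |y| ≤ 1) (n : ℕ) : |legendreP n y| ≤ 1 := by
  have hint : ‖∫ φ in (0 : ℝ)..π, laplaceBase y φ ^ n‖ ≤ 1 * |π - 0| :=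
    intervalIntegral.norm_integral_le_of_norm_le_const fun φ _ ↦ by
      rw [norm_pow]
      exact pow_le_one₀ (norm_nonneg _) (norm_laplaceBase_le_one hy φ)
  rw [one_mul, sub_zero, abs_of_pos Real.pi_pos] at hint
  rw [← Real.norm_eq_abs, ← Complex.norm_real, legendreP_eq_integral hy, norm_mul, norm_inv,
    Complex.norm_real, Real.norm_of_nonneg Real.pi_pos.le]
  exact inv_mul_le_one_of_le₀ hint Real.pi_pos.le

end LaplaceIntegral

section LogarithmicSeries

open MeasureTheory
open scoped Real Interval

theorem hasSum_pow_div_neg_log {x : ℝ} (hx : |x| < 1) :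
    HasSum (fun n : ℕ ↦ x ^ n / n) (-Real.log (1 - x)) := by
  refine (hasSum_nat_add_iff' 1).1 ?_
  simpa using Real.hasSum_pow_div_log_of_abs_lt_one hx

theorem ae_sin_pos_of_mem_uIoc : ∀ᵐ φ : ℝ, φ ∈ Ι 0 π → 0 < Real.sin φ := by
  filter_upwards [Measure.ae_ne volume π] with φ hφ hmem
  rw [Set.uIoc_of_le Real.pi_pos.le] at hmem
  exact Real.sin_pos_of_pos_of_lt_pi hmem.1 (lt_of_le_of_ne hmem.2 hφ)

variable {y : ℝ}

theorem hasSum_integral_laplaceBase_pow_div (hy : |y| < 1) :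
    HasSum (fun n : ℕ ↦ ∫ φ in (0 : ℝ)..π, laplaceBase y φ ^ n / n)
      (∫ φ in (0 : ℝ)..π, -Complex.log (1 - laplaceBase y φ)) := by
  set ρ : ℝ → ℝ := fun φ ↦ 1 - (1 - y ^ 2) * Real.sin φ ^ 2 / 2 with hρ
  have hnorm_le (φ : ℝ) : ‖laplaceBase y φ‖ ≤ ρ φ := norm_laplaceBase_le hy.le φ
  have hlt_one : ∀ᵐ φ : ℝ, φ ∈ Ι 0 π → ρ φ < 1 := by
    filter_upwards [ae_sin_pos_of_mem_uIoc] with φ hφ hmem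
    have hsin := hφ hmem
    have hy' : 0 < 1 - y ^ 2 := sub_pos.2 ((sq_lt_one_iff_abs_lt_one y).2 hy)
    exact sub_lt_self _ (by positivity)
  have hsum : ∀ᵐ φ : ℝ, φ ∈ Ι 0 π → HasSum (fun n : ℕ ↦ ρ φ ^ n / n) (-Real.log (1 - ρ φ)) := by
    filter_upwards [hlt_one] with φ hφ hmem
    exact hasSum_pow_div_neg_log
      ((abs_of_nonneg ((norm_nonneg _).trans (hnorm_le φ))).trans_lt (hφ hmem))
  have hlog : IntervalIntegrable (fun φ ↦ -Real.log (1 - ρ φ)) volume 0 π := by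
    have hanalytic : AnalyticOnNhd ℝ (fun φ ↦ 1 - ρ φ) (Set.uIcc 0 π) := fun φ _ ↦ by
      simp only [hρ]
      fun_prop
    exact hanalytic.meromorphicOn.intervalIntegrable_log.neg
  refine intervalIntegral.hasSum_integral_of_dominated_convergence (fun n φ ↦ ρ φ ^ n / n)
    (fun n ↦ ?_) (fun n ↦ ?_) ?_ ?_ ?_
  · exact (((continuous_laplaceBase y).pow n).div_const _).aestronglyMeasurable
  · refine .of_forall fun φ _ ↦ ?_
    rw [norm_div, norm_pow, Complex.norm_natCast]
    gcongr
    exact hnorm_le φ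
  · filter_upwards [hsum] with φ hφ hmem using (hφ hmem).summable
  · refine hlog.congr_ae ?_
    rw [EventuallyEq, ae_restrict_iff' measurableSet_uIoc]
    filter_upwards [hsum] with φ hφ hmem using (hφ hmem).tsum_eq.symm
  · filter_upwards [hlt_one] with φ hφ hmem
    exact Complex.hasSum_taylorSeries_neg_log ((hnorm_le φ).trans_lt (hφ hmem))

/-- The term `n = 0` vanishes because `1 / 0 = 0`. -/
theorem hasSum_legendreP_div (hy : |y| < 1) :
    HasSum (fun n : ℕ ↦ legendreP n y / n)
      (π⁻¹ * ∫ φ in (0 : ℝ)..π, -Real.log ‖1 - laplaceBase y φ‖) := by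
  have hlog : Continuous fun φ ↦ -Complex.log (1 - laplaceBase y φ) :=
    (continuous_log_one_sub_laplaceBase (abs_lt.1 hy).2).neg
  have hre : (∫ φ in (0 : ℝ)..π, -Complex.log (1 - laplaceBase y φ)).re =
      ∫ φ in (0 : ℝ)..π, -Real.log ‖1 - laplaceBase y φ‖ := by
    simpa only [Complex.reCLM_apply, Complex.neg_re, Complex.log_re] using
      (Complex.reCLM.intervalIntegral_comp_comm (hlog.intervalIntegrable 0 π)).symm
  rw [← hre, ← Complex.re_ofReal_mul]
  refine (Complex.hasSum_re ((hasSum_integral_laplaceBase_pow_div hy).mul_left _)).congr_fun ?_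
  intro n
  rw [intervalIntegral.integral_div, ← mul_div_assoc, Complex.ofReal_inv,
    ← legendreP_eq_integral hy.le, Complex.div_natCast_re, Complex.ofReal_re]

theorem neg_log_two_mul_one_sub_le_tsum_legendreP_div (hy : |y| < 1) :
    -Real.log (2 * (1 - y)) / 2 ≤ ∑' n : ℕ, legendreP n y / n := by
  have hy_lt := (abs_lt.1 hy).2
  have hcont : Continuous fun φ ↦ Real.log ‖1 - laplaceBase y φ‖ := by
    simpa only [Function.comp_def, Complex.log_re] using
      Complex.continuous_re.comp (continuous_log_one_sub_laplaceBase hy_lt)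
  have hlog (φ : ℝ) : -Real.log (2 * (1 - y)) / 2 ≤ -Real.log ‖1 - laplaceBase y φ‖ := by
    have hne := Complex.slitPlane_ne_zero (one_sub_laplaceBase_mem_slitPlane hy_lt φ)
    have hle := Real.log_le_log (pow_pos (norm_pos_iff.2 hne) 2)
      (norm_one_sub_laplaceBase_sq_le hy.le φ)
    rw [Real.log_pow, Nat.cast_ofNat] at hle
    linarith
  have hint := intervalIntegral.integral_mono_on (μ := volume) Real.pi_pos.le
    intervalIntegrable_const (hcont.neg.intervalIntegrable 0 π) fun φ _ ↦ hlog φ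
  rw [intervalIntegral.integral_const, sub_zero, smul_eq_mul] at hint
  rw [(hasSum_legendreP_div hy).tsum_eq]
  exact (le_inv_mul_iff₀ Real.pi_pos).2 hint

theorem eventually_abs_lt_one_nhdsLT_one : ∀ᶠ y : ℝ in 𝓝[<] 1, |y| < 1 := by
  filter_upwards [Ioo_mem_nhdsLT (by norm_num : (-1 : ℝ) < 1)] with y hy using abs_lt.2 hy

theorem tendsto_tsum_legendreP_div_atTop :
    Tendsto (fun y ↦ ∑' n : ℕ, legendreP n y / n) (𝓝[<] 1) atTop := by
  have hzero : Tendsto (fun y : ℝ ↦ 2 * (1 - y)) (𝓝[<] 1) (𝓝[>] 0) := by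
    refine tendsto_nhdsWithin_iff.2 ⟨?_, ?_⟩
    · have hcont : Continuous fun y : ℝ ↦ 2 * (1 - y) := by fun_prop
      exact (hcont.tendsto' 1 0 (by norm_num)).mono_left nhdsWithin_le_nhds
    · filter_upwards [self_mem_nhdsWithin] with y hy
      exact mul_pos (two_pos : (0 : ℝ) < 2) (sub_pos.2 hy)
  have hlog : Tendsto (fun y : ℝ ↦ -Real.log (2 * (1 - y)) / 2) (𝓝[<] 1) atTop :=
    (tendsto_neg_atBot_atTop.comp (Real.tendsto_log_nhdsGT_zero.comp hzero)).atTop_div_const two_pos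
  refine tendsto_atTop_mono' _ ?_ hlog
  filter_upwards [eventually_abs_lt_one_nhdsLT_one] with y hy
  exact neg_log_two_mul_one_sub_le_tsum_legendreP_div hy

end LogarithmicSeries

theorem tendsto_tsum_mul_legendreP_atTop {c : ℕ → ℝ} {κ : ℝ} (hκ : 0 < κ)
    (hc : Summable fun n : ℕ ↦ c n - κ / n) :
    Tendsto (fun y ↦ ∑' n : ℕ, c n * legendreP n y) (𝓝[<] 1) atTop := by
  refine tendsto_atTop_mono' _ ?_ (tendsto_atTop_add_const_right _ (-∑' n : ℕ, ‖c n - κ / n‖)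
    (tendsto_tsum_legendreP_div_atTop.const_mul_atTop hκ))
  filter_upwards [eventually_abs_lt_one_nhdsLT_one] with y hy
  have hle (n : ℕ) : ‖(c n - κ / n) * legendreP n y‖ ≤ ‖c n - κ / n‖ := by
    rw [norm_mul]
    exact mul_le_of_le_one_right (norm_nonneg _) (abs_legendreP_le_one hy.le n)
  have hsplit : ∑' n : ℕ, c n * legendreP n y =
      κ * (∑' n : ℕ, legendreP n y / n) + ∑' n : ℕ, (c n - κ / n) * legendreP n y := by
    rw [← tsum_mul_left, ← ((hasSum_legendreP_div hy).summable.mul_left κ).tsum_add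
      (hc.norm.of_norm_bounded hle)]
    exact tsum_congr fun n ↦ by ring
  have hbound := tsum_of_norm_bounded hc.norm.hasSum hle
  rw [hsplit]
  gcongr
  exact (abs_le.1 hbound).1

theorem summable_screened_coeff_sub_two_div (w : ℝ) :
    Summable fun l : ℕ ↦ (2 * l + 1) / (l * (l + 1) + w) - 2 / (l : ℝ) := by
  have hsq : Summable fun l : ℕ ↦ 2 * (1 / (l : ℝ) ^ 2) :=
    (Real.summable_one_div_nat_pow.2 one_lt_two).mul_left 2
  refine hsq.of_norm_bounded_eventually_nat ?_
  filter_upwards [eventually_gt_atTop 0,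
    tendsto_natCast_atTop_atTop.eventually_ge_atTop (2 * |w|)] with l hl hwl
  have hl' : (0 : ℝ) < l := Nat.cast_pos.2 hl
  obtain ⟨hw_neg, hw_pos⟩ := abs_le.1 (le_refl |w|)
  have hden : (l : ℝ) ^ 2 ≤ l * (l + 1) + w := by linarith [abs_nonneg w]
  have hden_pos : 0 < l * (l + 1) + w := (pow_pos hl' 2).trans_le hden
  have hdiff : (2 * l + 1) / (l * (l + 1) + w) - 2 / (l : ℝ) =
      -((l + 2 * w) / (l * (l * (l + 1) + w))) := by
    field_simp
    ring
  have hnum : |l + 2 * w| ≤ 2 * l := abs_le.2 ⟨by linarith, by linarith⟩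
  calc ‖(2 * l + 1) / (l * (l + 1) + w) - 2 / (l : ℝ)‖
      = |l + 2 * w| / (l * (l * (l + 1) + w)) := by
        rw [hdiff, norm_neg, Real.norm_eq_abs, abs_div, abs_of_pos (mul_pos hl' hden_pos)]
    _ ≤ 2 * l / (l * (l : ℝ) ^ 2) := by gcongr
    _ = 2 * (1 / (l : ℝ) ^ 2) := by field_simp

theorem screened_series_blowup_general (w : ℝ) (_hw : ∀ l : ℕ, (l : ℝ) * (l + 1) + w ≠ 0) :
    Tendsto (fun y : ℝ ↦ ∑' l : ℕ, (2 * l + 1) * legendreP l y / (l * (l + 1) + w))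
      (𝓝[<] 1) atTop := by
  simpa only [div_mul_eq_mul_div] using
    tendsto_tsum_mul_legendreP_atTop two_pos (summable_screened_coeff_sub_two_div w)

/-- For fixed `w > 0`, `f(w,y) = ∑ (2l+1) P l y/(l(l+1)+w)` tends to `+∞` as `y → 1⁻`
(equivalently, the Green's function diverges to `-∞` as the angular separation tends
to `0`). -/
theorem screened_series_blowup (w : ℝ) (hw : 0 < w) :
    Tendsto (fun y : ℝ => ∑' l : ℕ,
        (2 * (l : ℝ) + 1) * legendreP l y / ((l : ℝ) * ((l : ℝ) + 1) + w))
      (nhdsWithin 1 (Set.Iio 1)) atTop :=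
  screened_series_blowup_general w fun l ↦ by positivity
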